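/- Let p ≥ 1 be an integer and let W : ℝ → ℝ be bounded, of bounded variation, with W(x) = 0 for |x| ≥ 1, ∫_ℝ W(α) dα = 1, and ∫_ℝ W(α) α^j dα = 0 for every integer 1 ≤ j ≤ p−1. Then there exists C > 0, depending only on W and p, such that for every integer T ≥ 2, every b ∈ (0, π/2), every ω ∈ [0, 2π], and every integer 0 ≤ j ≤ p−1: |(2π/T) ∑_{s=0}^{T−1} W_b(ω − u_s) · (ω − u_s)^j − δ_{0j}| ≤ C/(T·b), where δ_{0j} = 1 if j = 0 and 0 otherwise. -/

import Mathlib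

/-- The periodized smoothing kernel `W_b(x) = (1/b) ∑_{k ∈ ℤ} W((x + 2kπ)/b)`. -/
noncomputable def Wper (W : ℝ → ℝ) (b x : ℝ) : ℝ :=
  (1 / b) * ∑' k : ℤ, W ((x + 2 * (k : ℝ) * Real.pi) / b)

/-! Summing over the integers the estimate `|F(n) - ∫_n^{n+1} F| ≤ Var(F; [n, n+1])` shows that
`∑_n F(n)` differs from `∫ F` by at most the total variation of `F`. Up to the factor `b^(j-1)`,
the sum in the theorem is `∑_n g((ω - 2πn/T)/b)` for `g(x) = W(x) x^j`: as `g(·/b)` vanishes outside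
`(-π, π)`, each residue class mod `T` contributes at most one nonzero term, the one at the
representative nearest to `ω`. An affine change of variable keeps the variation of `g` and
multiplies its integral by `bT/(2π)`, so the relative error is of order `1/(Tb)`. -/

open Filter Function MeasureTheory Set
open scoped Real

section BoundedVariation

theorem tsum_eVariationOn_Icc_le {α E : Type*} [LinearOrder α] [PseudoEMetricSpace E] (f : α → E)
    {I : ℤ → α} (hI : Monotone I) :
    ∑' n, eVariationOn f (Icc (I n) (I (n + 1))) ≤ eVariationOn f univ := by
  refine le_of_tendsto' (ENNReal.summable.hasSum.comp Finset.tendsto_Ico_neg) fun N => ?_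
  have hshift : Monotone fun i : ℕ => I (-N + i) := fun i k hik => hI (by gcongr)
  calc ∑ n ∈ Finset.Ico (-N : ℤ) N, eVariationOn f (Icc (I n) (I (n + 1)))
      = ∑ i ∈ Finset.range (N + N),
          eVariationOn f (Icc (I (-N + i)) (I (-N + (i + 1 : ℕ)))) := by
        rw [Int.Ico_eq_finset_map, Finset.sum_map, show ((N : ℤ) - -N).toNat = N + N by omega]
        simp [add_assoc]
    _ = eVariationOn f (Icc (I (-N + (0 : ℕ))) (I (-N + (N + N : ℕ)))) :=
        eVariationOn.sum' f hshift
    _ ≤ eVariationOn f univ := eVariationOn.mono f (subset_univ _)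

theorem boundedVariationOn_univ_mul_of_support_subset_Icc {α : Type*} [LinearOrder α] {a b : α}
    {f g : α → ℝ} (hf : BoundedVariationOn f univ) (hg : BoundedVariationOn g (Icc a b))
    (hfs : support f ⊆ Icc a b) : BoundedVariationOn (fun x => f x * g x) univ := by
  rcases le_or_gt a b with hab | hab
  · have hclamp : BoundedVariationOn (fun x => g (projIcc a b hab x)) univ :=
      ne_top_of_le_ne_top hg <| eVariationOn.comp_le_of_monotoneOn g _
        (fun _ _ _ _ hxy => monotone_projIcc hab hxy) fun x _ => (projIcc a b hab x).2
    convert hf.mul hclamp using 1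
    funext x
    by_cases hx : x ∈ Icc a b
    · simp [projIcc_of_mem hab hx]
    · simp [notMem_support.1 fun h => hx (hfs h)]
  · have hf0 : f = 0 := by simpa [Icc_eq_empty hab.not_ge] using hfs
    simpa [hf0, Pi.zero_def] using hf

theorem boundedVariationOn_pow {α : Type*} [LinearOrder α] {f : α → ℝ} {s : Set α}
    (hf : BoundedVariationOn f s) (n : ℕ) : BoundedVariationOn (fun x => f x ^ n) s := by
  induction n with
  | zero => simp [BoundedVariationOn, (eVariationOn.eq_zero_iff fun _ : α => (1 : ℝ)).2]
  | succ n ih => simpa only [pow_succ] using ih.fun_mul hf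

theorem locallyIntegrable_of_locallyBoundedVariationOn {f : ℝ → ℝ} {μ : Measure ℝ}
    [IsLocallyFiniteMeasure μ] (hf : LocallyBoundedVariationOn f univ) :
    LocallyIntegrable f μ := by
  obtain ⟨p, q, hp, hq, rfl⟩ := hf.exists_monotoneOn_sub_monotoneOn
  exact (monotoneOn_univ.1 hp).locallyIntegrable.sub (monotoneOn_univ.1 hq).locallyIntegrable

end BoundedVariation

section RiemannSum

variable {E : Type*} [NormedAddCommGroup E] [NormedSpace ℝ E] [CompleteSpace E] {F : ℝ → E}

theorem norm_smul_sub_integral_le_eVariationOn {a b : ℝ} (hab : a ≤ b)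
    (hF : BoundedVariationOn F (Icc a b)) (hFi : IntervalIntegrable F volume a b) :
    ‖(b - a) • F a - ∫ x in a..b, F x‖ ≤ (b - a) * (eVariationOn F (Icc a b)).toReal := by
  rw [← intervalIntegral.integral_const, ← intervalIntegral.integral_sub (by simp) hFi, mul_comm,
    ← abs_of_nonneg (sub_nonneg.2 hab)]
  refine intervalIntegral.norm_integral_le_of_norm_le_const fun x hx => ?_
  rw [uIoc_of_le hab] at hx
  rw [← dist_eq_norm]
  exact hF.dist_le (left_mem_Icc.2 hab) (Ioc_subset_Icc_self hx)

theorem norm_tsum_intCast_sub_integral_le_eVariationOn (hF : BoundedVariationOn F univ)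
    (hFi : Integrable F) : ‖∑' n : ℤ, F n - ∫ x, F x‖ ≤ (eVariationOn F univ).toReal := by
  set V : ℤ → ENNReal := fun n => eVariationOn F (Icc (n : ℝ) (n + 1))
  have hVsum : ∑' n, V n ≤ eVariationOn F univ := by
    simpa using tsum_eVariationOn_Icc_le F (I := fun n : ℤ => (n : ℝ)) Int.cast_mono
  have hVsummable : Summable fun n => (V n).toReal :=
    ENNReal.summable_toReal (ne_top_of_le_ne_top hF hVsum)
  have hcell (n : ℤ) : ‖F n - ∫ x in (n : ℝ)..n + 1, F x‖ ≤ (V n).toReal := by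
    simpa using norm_smul_sub_integral_le_eVariationOn (le_add_of_nonneg_right zero_le_one)
      (hF.mono (subset_univ (Icc (n : ℝ) (n + 1)))) hFi.intervalIntegrable
  have hintegral : HasSum (fun n : ℤ => ∫ x in (n : ℝ)..n + 1, F x) (∫ x, F x) := by
    simpa using hFi.hasSum_intervalIntegral 0
  have herror : Summable fun n : ℤ => F n - ∫ x in (n : ℝ)..n + 1, F x :=
    .of_norm_bounded hVsummable hcell
  have hsummable : Summable fun n : ℤ => F n := by
    simpa using herror.add hintegral.summable
  calc ‖∑' n : ℤ, F n - ∫ x, F x‖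
      = ‖∑' n : ℤ, (F n - ∫ x in (n : ℝ)..n + 1, F x)‖ := by
        rw [hsummable.tsum_sub hintegral.summable, hintegral.tsum_eq]
    _ ≤ ∑' n, (V n).toReal := tsum_of_norm_bounded hVsummable.hasSum hcell
    _ = (∑' n, V n).toReal := (ENNReal.tsum_toReal_eq fun n => hF.mono (subset_univ _)).symm
    _ ≤ (eVariationOn F univ).toReal := ENNReal.toReal_mono hF hVsum

theorem norm_smul_tsum_sub_integral_le_eVariationOn (hF : BoundedVariationOn F univ)
    (hFi : Integrable F) {h : ℝ} (hh : 0 < h) (x₀ : ℝ) :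
    ‖h • ∑' n : ℤ, F (x₀ - n * h) - ∫ x, F x‖ ≤ h * (eVariationOn F univ).toReal := by
  have hvar : eVariationOn (fun y => F (x₀ - y * h)) univ ≤ eVariationOn F univ :=
    eVariationOn.comp_le_of_antitoneOn F _ (fun x _ y _ hxy => by gcongr) (mapsTo_univ _ _)
  have hint : ∫ y, F (x₀ - y * h) = h⁻¹ • ∫ x, F x := by
    rw [Measure.integral_comp_mul_right (fun y => F (x₀ - y)) h, integral_sub_left_eq_self,
      abs_of_pos (inv_pos.2 hh)]
  have hbound := norm_tsum_intCast_sub_integral_le_eVariationOn (ne_top_of_le_ne_top hF hvar)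
    ((hFi.comp_sub_left x₀).comp_mul_right' hh.ne')
  calc ‖h • ∑' n : ℤ, F (x₀ - n * h) - ∫ x, F x‖
      = h * ‖∑' n : ℤ, F (x₀ - n * h) - ∫ y, F (x₀ - y * h)‖ := by
        rw [hint, ← norm_smul_of_nonneg hh.le, smul_sub, smul_inv_smul₀ hh.ne']
    _ ≤ h * (eVariationOn F univ).toReal := by
        gcongr
        exact hbound.trans (ENNReal.toReal_mono hF hvar)

end RiemannSum

section Grid

variable {E : Type*} [AddCommMonoid E] [TopologicalSpace E] {T : ℕ}

theorem sum_range_eq_tsum_of_modEq (hT : 0 < T) {m : ℕ → ℤ} (hm : ∀ s < T, m s ≡ s [ZMOD T])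
    {f : ℤ → E} (hf : ∀ n, f n ≠ 0 → ∀ s < T, n ≡ s [ZMOD T] → n = m s) :
    ∑ s ∈ Finset.range T, f (m s) = ∑' n, f n := by
  have hinj : Injective fun s : Fin T => m s := fun s t (hst : m s = m t) => by
    have hmod : (s : ℤ) ≡ t [ZMOD T] := (hm s s.2).symm.trans (hst ▸ hm t t.2)
    exact Fin.ext ((Int.natCast_modEq_iff.1 hmod).eq_of_lt_of_lt s.2 t.2)
  have hrange : support f ⊆ range fun s : Fin T => m s := fun n hn => by
    obtain ⟨s, hs⟩ := Int.eq_ofNat_of_zero_le (Int.emod_nonneg n (by omega : (T : ℤ) ≠ 0))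
    have hsT : s < T := by have := Int.emod_lt_of_pos n (by omega : (0 : ℤ) < T); omega
    exact ⟨⟨s, hsT⟩, (hf n hn s hsT (hs ▸ (Int.mod_modEq n T).symm)).symm⟩
  rw [← hinj.tsum_eq hrange, tsum_fintype, Finset.sum_range]

theorem sum_grid_eq_tsum (hT : 0 < T) {G : ℝ → E} (hG : ∀ x, π ≤ |x| → G x = 0) {ω : ℝ}
    {u : ℕ → ℝ} (hu : ∀ s < T, (∃ k : ℤ, u s = 2 * π * s / T + 2 * (k : ℝ) * π) ∧
      |ω - u s| ≤ π) :
    ∑ s ∈ Finset.range T, G (ω - u s) = ∑' n : ℤ, G (ω - n * (2 * π / T)) := by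
  have hT' : (T : ℝ) ≠ 0 := by positivity
  set h := 2 * π / T with hh
  have hTh : T * h = 2 * π := by rw [hh]; field_simp
  have hhpos : 0 < h := by positivity
  choose! k hk using fun s hs => (hu s hs).1
  set m : ℕ → ℤ := fun s => s + T * k s with hm
  have hum (s : ℕ) (hs : s < T) : u s = m s * h := by
    rw [hk s hs, hm, hh]
    push_cast
    field_simp
  have hunique (n : ℤ) (hn : G (ω - n * h) ≠ 0) (s : ℕ) (hs : s < T) (hns : n ≡ s [ZMOD T]) :
      n = m s := by
    have hdvd : (T : ℤ) ∣ n - m s :=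
      ((Int.modEq_add_fac_self (n := (T : ℤ))).trans hns.symm).dvd
    have hnear : |ω - n * h| < π := lt_of_not_ge fun hle => hn (hG _ hle)
    have hlt : |(n - m s : ℝ)| * h < T * h := by
      calc |(n - m s : ℝ)| * h = |(ω - u s) - (ω - n * h)| := by
            rw [hum s hs, ← abs_of_pos hhpos, ← abs_mul, abs_of_pos hhpos]
            congr 1
            ring
        _ ≤ |ω - u s| + |ω - n * h| := abs_sub _ _
        _ < T * h := by linarith [(hu s hs).2]
    have hlt' : |n - m s| < T := by exact_mod_cast lt_of_mul_lt_mul_right hlt hhpos.le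
    exact sub_eq_zero.1 (Int.eq_zero_of_abs_lt_dvd hdvd hlt')
  rw [← sum_range_eq_tsum_of_modEq hT (fun s _ => Int.modEq_add_fac_self) hunique]
  exact Finset.sum_congr rfl fun s hs => by rw [hum s (Finset.mem_range.1 hs)]

end Grid

section Kernel

variable {W : ℝ → ℝ} (hBV : BoundedVariationOn W univ) (hsupp : ∀ x : ℝ, 1 ≤ |x| → W x = 0)
include hsupp

theorem apply_div_eq_zero_of_le_abs {b x : ℝ} (hb : 0 < b) (hx : b ≤ |x|) : W (x / b) = 0 :=
  hsupp _ (by rwa [abs_div, abs_of_pos hb, one_le_div hb])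

theorem Wper_eq_of_abs_le_pi {b x : ℝ} (hb : 0 < b) (hbπ : b ≤ π) (hx : |x| ≤ π) :
    Wper W b x = 1 / b * W (x / b) := by
  rw [Wper, tsum_eq_single (0 : ℤ)]
  · simp
  · intro k hk
    have hk1 : (1 : ℝ) ≤ |(k : ℝ)| := by exact_mod_cast Int.one_le_abs hk
    have hshift : π ≤ |x + 2 * (k : ℝ) * π| :=
      calc π ≤ 2 * |(k : ℝ)| * π - |x| := by nlinarith [Real.pi_pos]
        _ = |2 * (k : ℝ) * π| - |x| := by rw [abs_mul, abs_mul, abs_two, abs_of_pos Real.pi_pos]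
        _ ≤ |x + 2 * (k : ℝ) * π| := by
          rw [add_comm]
          exact abs_sub_abs_le_abs_add _ _
    exact apply_div_eq_zero_of_le_abs hsupp hb (hbπ.trans hshift)

theorem sum_Wper_mul_pow_eq_tsum {T : ℕ} (hT : 0 < T) {b : ℝ} (hb : 0 < b) (hbπ : b ≤ π)
    {ω : ℝ} {u : ℕ → ℝ}
    (hu : ∀ s < T, (∃ k : ℤ, u s = 2 * π * s / T + 2 * (k : ℝ) * π) ∧ |ω - u s| ≤ π) (j : ℕ) :
    ∑ s ∈ Finset.range T, Wper W b (ω - u s) * (ω - u s) ^ j =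
      b ^ j / b * ∑' n : ℤ, W ((ω - n * (2 * π / T)) / b) * ((ω - n * (2 * π / T)) / b) ^ j := by
  set G : ℝ → ℝ := fun x => W (x / b) * (x / b) ^ j with hG
  have hGπ (x : ℝ) (hx : π ≤ |x|) : G x = 0 := by
    simp only [hG, apply_div_eq_zero_of_le_abs hsupp hb (hbπ.trans hx), zero_mul]
  rw [← sum_grid_eq_tsum hT hGπ hu, Finset.mul_sum]
  refine Finset.sum_congr rfl fun s hs => ?_
  rw [Wper_eq_of_abs_le_pi hsupp hb hbπ (hu s (Finset.mem_range.1 hs)).2]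
  simp only [hG, div_pow]
  field_simp

theorem support_mul_pow_subset_Icc (j : ℕ) : support (fun x => W x * x ^ j) ⊆ Icc (-1) 1 :=
  fun x hx => abs_le.1 (lt_of_not_ge fun h => hx (by simp [hsupp x h])).le

include hBV

theorem boundedVariationOn_mul_pow (j : ℕ) : BoundedVariationOn (fun x => W x * x ^ j) univ :=
  boundedVariationOn_univ_mul_of_support_subset_Icc hBV
    (boundedVariationOn_pow (BoundedVariationOn.id_Icc (-1) 1) j)
    (by simpa using support_mul_pow_subset_Icc hsupp 0)

theorem integrable_mul_pow (j : ℕ) : Integrable fun x => W x * x ^ j :=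
  (integrableOn_iff_integrable_of_support_subset (support_mul_pow_subset_Icc hsupp j)).1 <|
    (locallyIntegrable_of_locallyBoundedVariationOn
      (boundedVariationOn_mul_pow hBV hsupp j).locallyBoundedVariationOn).integrableOn_isCompact
      isCompact_Icc

theorem abs_sum_Wper_mul_pow_sub_le {T : ℕ} (hT : 0 < T) {b : ℝ} (hb : 0 < b) (hbπ : b ≤ π)
    {ω : ℝ} {u : ℕ → ℝ}
    (hu : ∀ s < T, (∃ k : ℤ, u s = 2 * π * s / T + 2 * (k : ℝ) * π) ∧ |ω - u s| ≤ π) (j : ℕ) :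
    |(2 * π / T) * ∑ s ∈ Finset.range T, Wper W b (ω - u s) * (ω - u s) ^ j -
        b ^ j * ∫ x, W x * x ^ j| ≤
      b ^ j * (2 * π * (eVariationOn (fun x => W x * x ^ j) univ).toReal) / (T * b) := by
  set g : ℝ → ℝ := fun x => W x * x ^ j
  set h : ℝ := 2 * π / T with hh
  have hsum : ∑ s ∈ Finset.range T, Wper W b (ω - u s) * (ω - u s) ^ j =
      b ^ j / b * ∑' n : ℤ, g (ω / b - n * (h / b)) := by
    simp only [sum_Wper_mul_pow_eq_tsum hsupp hT hb hbπ hu j, g, h, sub_div, mul_div_assoc _ _ b]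
  have hriemann : |h / b * ∑' n : ℤ, g (ω / b - n * (h / b)) - ∫ x, g x| ≤
      h / b * (eVariationOn g univ).toReal :=
    norm_smul_tsum_sub_integral_le_eVariationOn (boundedVariationOn_mul_pow hBV hsupp j)
      (integrable_mul_pow hBV hsupp j) (by positivity) _
  calc |h * ∑ s ∈ Finset.range T, Wper W b (ω - u s) * (ω - u s) ^ j - b ^ j * ∫ x, g x|
      = b ^ j * |h / b * ∑' n : ℤ, g (ω / b - n * (h / b)) - ∫ x, g x| := by
        rw [← abs_of_pos (pow_pos hb j), ← abs_mul, abs_of_pos (pow_pos hb j), hsum]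
        congr 1
        ring
    _ ≤ b ^ j * (h / b * (eVariationOn g univ).toReal) := by gcongr
    _ = b ^ j * (2 * π * (eVariationOn g univ).toReal) / (T * b) := by
        rw [hh]
        field_simp

theorem kernel_riemann_sum_A_general (d : ℕ) :
    ∃ C > (0 : ℝ), ∀ T : ℕ, 0 < T → ∀ b : ℝ, 0 < b → b ≤ π → ∀ ω : ℝ, ∀ j ≤ d, ∀ u : ℕ → ℝ,
      (∀ s < T, (∃ k : ℤ, u s = 2 * π * s / T + 2 * (k : ℝ) * π) ∧
        |ω - u s| ≤ π) →
      |(2 * π / T) * ∑ s ∈ Finset.range T, Wper W b (ω - u s) * (ω - u s) ^ j -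
          b ^ j * ∫ x, W x * x ^ j| ≤ C / (T * b) := by
  set A : ℕ → ℝ := fun j =>
    π ^ j * (2 * π * (eVariationOn (fun x => W x * x ^ j) univ).toReal) with hA
  have hA0 (j : ℕ) : 0 ≤ A j := by positivity
  refine ⟨∑ j ∈ Finset.range (d + 1), A j + 1, by positivity, fun T hT b hb hbπ ω j hj u hu => ?_⟩
  refine (abs_sum_Wper_mul_pow_sub_le hBV hsupp hT hb hbπ hu j).trans ?_
  gcongr
  calc b ^ j * (2 * π * (eVariationOn (fun x => W x * x ^ j) univ).toReal)
      ≤ A j := by simp only [hA]; gcongr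
    _ ≤ ∑ j ∈ Finset.range (d + 1), A j :=
        Finset.single_le_sum (fun i _ => hA0 i) (Finset.mem_range.2 (by omega))
    _ ≤ ∑ j ∈ Finset.range (d + 1), A j + 1 := le_add_of_nonneg_right zero_le_one

end Kernel

theorem pow_mul_moment_eq_ite {W : ℝ → ℝ} {d : ℕ} (hint : ∫ x, W x = 1)
    (hmom : ∀ j, 1 ≤ j → j ≤ d → ∫ x, W x * x ^ j = 0) (b : ℝ) {j : ℕ} (hj : j ≤ d) :
    b ^ j * ∫ x, W x * x ^ j = if j = 0 then 1 else 0 := by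
  split_ifs with h0
  · simpa [h0] using hint
  · rw [hmom j (Nat.one_le_iff_ne_zero.2 h0) hj, mul_zero]

/-- **Riemann-sum kernel lemma, part (A).**
Let `W` be bounded, of bounded variation, supported in `[-1,1]`, with `∫ W = 1` and
vanishing moments of orders `1, …, p-1`.  Then there is `C > 0` (depending only on `W, p`)
such that for all `T ≥ 2`, `b ∈ (0, π/2)`, `ω ∈ [0, 2π]`, `0 ≤ j ≤ p-1`, and any choice of
grid points `u s ∈ {2πs/T + 2kπ : k ∈ ℤ}` with `|ω - u s| ≤ π`,
`|(2π/T) ∑_{s<T} W_b(ω - u s)(ω - u s)^j - δ_{0j}| ≤ C/(T·b)`. -/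
theorem kernel_riemann_sum_A (p : ℕ) (hp : 1 ≤ p) (W : ℝ → ℝ)
    (hWbd : ∃ M, ∀ x, |W x| ≤ M)
    (hBV : BoundedVariationOn W Set.univ)
    (hsupp : ∀ x : ℝ, 1 ≤ |x| → W x = 0)
    (hint : (∫ x, W x) = 1)
    (hmom : ∀ j : ℕ, 1 ≤ j → j ≤ p - 1 → (∫ x, W x * x ^ j) = 0) :
    ∃ C > (0 : ℝ), ∀ T : ℕ, 2 ≤ T → ∀ b : ℝ, 0 < b → b < Real.pi / 2 →
      ∀ ω ∈ Set.Icc (0 : ℝ) (2 * Real.pi), ∀ j : ℕ, j ≤ p - 1 →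
      ∀ u : ℕ → ℝ,
        (∀ s < T, (∃ k : ℤ, u s = 2 * Real.pi * s / T + 2 * (k : ℝ) * Real.pi) ∧
          |ω - u s| ≤ Real.pi) →
        |(2 * Real.pi / T) * ∑ s ∈ Finset.range T, Wper W b (ω - u s) * (ω - u s) ^ j -
            (if j = 0 then 1 else 0)| ≤ C / (T * b) := by
  obtain ⟨C, hC, hbound⟩ := kernel_riemann_sum_A_general hBV hsupp (p - 1)
  refine ⟨C, hC, fun T hT b hb hbπ ω _ j hj u hu => ?_⟩
  simpa only [pow_mul_moment_eq_ite hint hmom b hj] using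
    hbound T (by omega) b hb (by linarith [Real.pi_pos]) ω j hj u hu
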